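/- arXiv:gr-qc/0401011 — 2 statements merged into one kernel-verified Lean document; each statement's English description precedes it below -/
import Mathlib

section
/- For every z with 0 ≤ z < 1, there exists d > 0 such that for all y > 0, y² ≥ d·√(y² − 2yz + 1)·X_z(y). (This is condition (iv): the quantity ρ/(αr), rescaled to y/(α(y,z)·X_z(y)) with α(y,z) = √(y² − 2yz + 1)/y, is bounded below by a positive constant on (0,∞).) -/
/-!
Since `t² - 2tz + 1 = (1 - z)(t² + 1) + z(t - 1)²`, the integrand is at most
`t²/((1 - z)(t² + 1))`, which is increasing in `t`; hence
`(1 - z)(y² + 1) X_z(y) ≤ y · y²`. As `z ≥ 0`, both `y` and `√(y² - 2yz + 1)` are at most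
`√(y² + 1)`, so their product is at most `y² + 1`, and `d = 1 - z` works.
-/

open Real Topology Filter MeasureTheory

/-- The tortoise coordinate `X z y = ∫_0^y t²/(t² - 2tz + 1) dt`. -/
noncomputable def X (z y : ℝ) : ℝ := ∫ t in (0:ℝ)..y, t ^ 2 / (t ^ 2 - 2 * t * z + 1)

lemma denom_lower_bound {z : ℝ} (hz0 : 0 ≤ z) (t : ℝ) :
    (1 - z) * (t ^ 2 + 1) ≤ t ^ 2 - 2 * t * z + 1 := by
  nlinarith [mul_nonneg hz0 (sq_nonneg (t - 1))]

lemma denom_pos {z : ℝ} (hz0 : 0 ≤ z) (hz1 : z < 1) (t : ℝ) :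
    0 < t ^ 2 - 2 * t * z + 1 :=
  lt_of_lt_of_le (mul_pos (sub_pos.2 hz1) (by positivity)) (denom_lower_bound hz0 t)

/-- The integrand on `[0, y]` is bounded by the value at `y` of its increasing majorant
`t²/((1 - z)(t² + 1))`. -/
lemma X_le {z : ℝ} (hz0 : 0 ≤ z) (hz1 : z < 1) {y : ℝ} (hy : 0 < y) :
    X z y ≤ y * (y ^ 2 / ((1 - z) * (y ^ 2 + 1))) := by
  have hc : 0 < 1 - z := sub_pos.2 hz1
  have hcont : Continuous fun t : ℝ => t ^ 2 / (t ^ 2 - 2 * t * z + 1) :=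
    Continuous.div (by fun_prop) (by fun_prop) fun t => (denom_pos hz0 hz1 t).ne'
  have h : X z y ≤ ∫ _ in (0:ℝ)..y, y ^ 2 / ((1 - z) * (y ^ 2 + 1)) := by
    refine intervalIntegral.integral_mono_on hy.le (hcont.intervalIntegrable _ _)
      intervalIntegrable_const fun t ht => ?_
    have hty : t ^ 2 ≤ y ^ 2 := pow_le_pow_left₀ ht.1 ht.2 2
    calc t ^ 2 / (t ^ 2 - 2 * t * z + 1) ≤ t ^ 2 / ((1 - z) * (t ^ 2 + 1)) :=
          div_le_div_of_nonneg_left (sq_nonneg t) (by positivity) (denom_lower_bound hz0 t)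
      _ ≤ y ^ 2 / ((1 - z) * (y ^ 2 + 1)) := by
          rw [div_le_div_iff₀ (by positivity) (by positivity)]
          nlinarith [mul_le_mul_of_nonneg_left hty hc.le]
  rwa [intervalIntegral.integral_const, sub_zero, smul_eq_mul] at h

/-- Condition (iv): `y/(α(y,z) X_z(y))` is bounded below by a positive constant,
i.e. `y² ≥ d √(y² - 2yz + 1) X_z(y)` for some `d > 0` and all `y > 0`. -/
theorem stmt_6 (z : ℝ) (hz0 : 0 ≤ z) (hz1 : z < 1) :
    ∃ d : ℝ, 0 < d ∧
      ∀ y : ℝ, 0 < y → y ^ 2 ≥ d * Real.sqrt (y ^ 2 - 2 * y * z + 1) * X z y := by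
  have hc : 0 < 1 - z := sub_pos.2 hz1
  refine ⟨1 - z, hc, fun y hy => ?_⟩
  have hs : √(y ^ 2 - 2 * y * z + 1) ≤ √(y ^ 2 + 1) :=
    Real.sqrt_le_sqrt (by nlinarith [mul_nonneg hy.le hz0])
  have hys : y ≤ √(y ^ 2 + 1) := Real.le_sqrt_of_sq_le (by linarith)
  have hprod : √(y ^ 2 - 2 * y * z + 1) * y ≤ y ^ 2 + 1 :=
    calc _ ≤ √(y ^ 2 + 1) * √(y ^ 2 + 1) := by gcongr
      _ = y ^ 2 + 1 := Real.mul_self_sqrt (by positivity)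
  calc (1 - z) * √(y ^ 2 - 2 * y * z + 1) * X z y
      ≤ (1 - z) * √(y ^ 2 - 2 * y * z + 1) * (y * (y ^ 2 / ((1 - z) * (y ^ 2 + 1)))) :=
        mul_le_mul_of_nonneg_left (X_le hz0 hz1 hy) (by positivity)
    _ = (√(y ^ 2 - 2 * y * z + 1) * y) * (y ^ 2 / (y ^ 2 + 1)) := by
        field_simp
    _ ≤ (y ^ 2 + 1) * (y ^ 2 / (y ^ 2 + 1)) := by gcongr
    _ = y ^ 2 := by field_simp
end

section
/- For every z with 0 ≤ z < 1, both of the following hold: the limit as y → 0⁺ of j_z'(y)/y equals −(4 − z²)/135, and the limit as y → 0⁺ of j_z''(y) equals −(4 − z²)/135. -/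
/-!
Put `D(y) = y² - 2yz + 1` and `Q(y) = X(y)/y³`. For `y ≠ 0` the powers of `y` in `w` cancel exactly:
`j = A Q³ + B Q²` with `A`, `B` polynomials in `y`. Hence `j'` and `j''` are polynomial in
`y, Q, Q', Q''`, and only the limits of `Q, Q', Q''` at `0⁺` are needed. These three functions have
the form `N(y)/yⁿ⁺¹` with `N(0) = 0` and `N'(y) = yⁿ g(y)`, `g` continuous at `0`, so l'Hôpital's
rule gives the limit `g(0)/(n+1)` (`tendsto_div_pow`):
`Q → 1/3`, `Q' → z/2`, `Q'' → 2(4z² - 1)/5`.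
Substituting, `j' → 0` and `j'' → -(4 - z²)/135`; a final l'Hôpital gives the limit of `j'(y)/y`.
-/

open Real Topology Filter MeasureTheory

/-- The function `w(x,y,z)`. -/
noncomputable def w (x y z : ℝ) : ℝ :=
  (-6 * z / y ^ 4 + (8 + 28 * z ^ 2) / y ^ 5 - (52 * z + 32 * z ^ 3) / y ^ 6
      + (20 + 76 * z ^ 2) / y ^ 7 - 54 * z / y ^ 8 + 12 / y ^ 9) * x ^ 3
    + (2 * z / y ^ 3 - (2 + 4 * z ^ 2) / y ^ 4 + 6 * z / y ^ 5 - 2 / y ^ 6) * x ^ 2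

/-- The function `j_z(y) = w(X_z(y), y, z)`. -/
noncomputable def j (z y : ℝ) : ℝ := w (X z y) y z

/-- The denominator `y² - 2yz + 1`. -/
noncomputable def den (z y : ℝ) : ℝ := y ^ 2 - 2 * y * z + 1

/-- The regularised tortoise coordinate `X/y³`. -/
noncomputable def Q (z y : ℝ) : ℝ := X z y / y ^ 3

/-- The derivative of `Q` on `y ≠ 0`, with the common power of `y` in the denominator. -/
noncomputable def Q1 (z y : ℝ) : ℝ := (y ^ 3 / den z y - 3 * X z y) / y ^ 4

/-- The second derivative of `Q` on `y ≠ 0`, with the common power of `y` in the denominator. -/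
noncomputable def Q2 (z y : ℝ) : ℝ :=
  (-(2 * y - 2 * z) / den z y ^ 2 * y ^ 4 - 4 * (y ^ 3 / den z y - 3 * X z y)) / y ^ 5

/-- The coefficient of `Q³` in `j`. -/
noncomputable def cA (z y : ℝ) : ℝ :=
  12 - 54 * z * y + (20 + 76 * z ^ 2) * y ^ 2 - (52 * z + 32 * z ^ 3) * y ^ 3
    + (8 + 28 * z ^ 2) * y ^ 4 - 6 * z * y ^ 5

/-- The derivative of `cA`. -/
noncomputable def cA1 (z y : ℝ) : ℝ :=
  - 54 * z + 2 * (20 + 76 * z ^ 2) * y - 3 * (52 * z + 32 * z ^ 3) * y ^ 2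
    + 4 * (8 + 28 * z ^ 2) * y ^ 3 - 30 * z * y ^ 4

/-- The second derivative of `cA`. -/
noncomputable def cA2 (z y : ℝ) : ℝ :=
  2 * (20 + 76 * z ^ 2) - 6 * (52 * z + 32 * z ^ 3) * y
    + 12 * (8 + 28 * z ^ 2) * y ^ 2 - 120 * z * y ^ 3

/-- The coefficient of `Q²` in `j`. -/
noncomputable def cB (z y : ℝ) : ℝ :=
  -2 + 6 * z * y - (2 + 4 * z ^ 2) * y ^ 2 + 2 * z * y ^ 3

/-- The derivative of `cB`. -/
noncomputable def cB1 (z y : ℝ) : ℝ := 6 * z - 2 * (2 + 4 * z ^ 2) * y + 6 * z * y ^ 2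

/-- The second derivative of `cB`. -/
noncomputable def cB2 (z y : ℝ) : ℝ := - 2 * (2 + 4 * z ^ 2) + 12 * z * y

/-- The derivative of `j` on `y > 0`. -/
noncomputable def j1 (z y : ℝ) : ℝ :=
  cA1 z y * Q z y ^ 3 + 3 * cA z y * Q z y ^ 2 * Q1 z y
    + cB1 z y * Q z y ^ 2 + 2 * cB z y * Q z y * Q1 z y

/-- The second derivative of `j` on `y > 0`. -/
noncomputable def j2 (z y : ℝ) : ℝ :=
  cA2 z y * Q z y ^ 3 + 6 * cA1 z y * Q z y ^ 2 * Q1 z y + 6 * cA z y * Q z y * Q1 z y ^ 2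
    + 3 * cA z y * Q z y ^ 2 * Q2 z y + cB2 z y * Q z y ^ 2 + 4 * cB1 z y * Q z y * Q1 z y
    + 2 * cB z y * Q1 z y ^ 2 + 2 * cB z y * Q z y * Q2 z y

lemma den_pos {z : ℝ} (hz0 : 0 ≤ z) (hz1 : z < 1) (y : ℝ) : 0 < den z y := by
  unfold den
  nlinarith [sq_nonneg (y - z)]

lemma hasDerivAt_den (z y : ℝ) : HasDerivAt (den z) (2 * y - 2 * z) y := by
  have h := (((hasDerivAt_id y).pow 2).sub (((hasDerivAt_id y).const_mul 2).mul_const z)).add_const 1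
  refine h.congr_deriv ?_
  simp

lemma hasDerivAt_X {z : ℝ} (hz0 : 0 ≤ z) (hz1 : z < 1) (y : ℝ) :
    HasDerivAt (X z) (y ^ 2 / den z y) y := by
  have hc : Continuous (fun t : ℝ => t ^ 2 / (t ^ 2 - 2 * t * z + 1)) := by
    refine Continuous.div (by fun_prop) (by fun_prop) fun t => ?_
    exact (den_pos hz0 hz1 t).ne'
  exact intervalIntegral.integral_hasDerivAt_right (hc.intervalIntegrable _ _)
    hc.aestronglyMeasurable.stronglyMeasurableAtFilter hc.continuousAt

/-- The numerator of `Q1`: the two terms `3y²/D` in its derivative cancel. -/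
lemma hasDerivAt_num1 {z : ℝ} (hz0 : 0 ≤ z) (hz1 : z < 1) (y : ℝ) :
    HasDerivAt (fun y => y ^ 3 / den z y - 3 * X z y)
      (y ^ 3 * (-(2 * y - 2 * z) / den z y ^ 2)) y := by
  have hD := (den_pos hz0 hz1 y).ne'
  refine (((hasDerivAt_pow 3 y).div (hasDerivAt_den z y) hD).sub
    ((hasDerivAt_X hz0 hz1 y).const_mul 3)).congr_deriv ?_
  field_simp
  push_cast
  ring

lemma hasDerivAt_num2 {z : ℝ} (hz0 : 0 ≤ z) (hz1 : z < 1) (y : ℝ) :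
    HasDerivAt (fun y => -(2 * y - 2 * z) / den z y ^ 2 * y ^ 4
        - 4 * (y ^ 3 / den z y - 3 * X z y))
      (y ^ 4 * (-2 / den z y ^ 2 + 2 * (2 * y - 2 * z) ^ 2 / den z y ^ 3)) y := by
  have hD := (den_pos hz0 hz1 y).ne'
  have hl : HasDerivAt (fun y : ℝ => -(2 * y - 2 * z)) (-2) y := by
    exact (((hasDerivAt_id y).const_mul 2).sub_const (2 * z)).neg.congr_deriv (by simp)
  refine (((hl.div ((hasDerivAt_den z y).pow 2) (pow_ne_zero 2 hD)).mul (hasDerivAt_pow 4 y)).sub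
    ((hasDerivAt_num1 hz0 hz1 y).const_mul 4)).congr_deriv ?_
  simp only [Pi.div_apply, Pi.pow_apply]
  field_simp
  push_cast
  ring

/-- L'Hôpital's rule for `N(y)/yⁿ⁺¹` when `N(0) = 0` and `N' = yⁿ g`. -/
lemma tendsto_div_pow (N g : ℝ → ℝ) (n : ℕ) (hN : ∀ y, HasDerivAt N (y ^ n * g y) y)
    (h0 : N 0 = 0) (hg : ContinuousAt g 0) :
    Tendsto (fun y => N y / y ^ (n + 1)) (𝓝[>] 0) (𝓝 (g 0 / (n + 1))) := by
  refine HasDerivAt.lhopital_zero_nhdsGT (f' := fun y => y ^ n * g y)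
    (g' := fun y => ((n + 1 : ℕ) : ℝ) * y ^ n) (.of_forall hN)
    (.of_forall fun y => hasDerivAt_pow (n + 1) y) ?_ ?_ ?_ ?_
  · filter_upwards [self_mem_nhdsWithin] with y hy
    have : (0 : ℝ) < y := hy
    positivity
  · have := (hN 0).continuousAt.tendsto
    rw [h0] at this
    exact this.mono_left nhdsWithin_le_nhds
  · have : Tendsto (fun y : ℝ => y ^ (n + 1)) (𝓝 0) (𝓝 (0 ^ (n + 1))) :=
      (continuous_pow (n + 1)).tendsto 0
    rw [zero_pow (by omega)] at this
    exact this.mono_left nhdsWithin_le_nhds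
  · have h : Tendsto (fun y => g y / (n + 1)) (𝓝[>] 0) (𝓝 (g 0 / (n + 1))) :=
      (hg.tendsto.mono_left nhdsWithin_le_nhds).div_const _
    refine h.congr' ?_
    filter_upwards [self_mem_nhdsWithin] with y hy
    have : (0 : ℝ) < y := hy
    push_cast
    field_simp

lemma X_zero (z : ℝ) : X z 0 = 0 := by simp [X]

lemma tendsto_Q {z : ℝ} (hz0 : 0 ≤ z) (hz1 : z < 1) :
    Tendsto (Q z) (𝓝[>] 0) (𝓝 (1 / 3)) := by
  have hD := fun y => (den_pos hz0 hz1 y).ne'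
  have h := tendsto_div_pow (X z) (fun y => 1 / den z y) 2
    (fun y => (hasDerivAt_X hz0 hz1 y).congr_deriv (by ring)) (X_zero z)
    (continuousAt_const.div (hasDerivAt_den z 0).continuousAt (hD 0))
  convert (show Tendsto (Q z) _ _ from h) using 2
  norm_num [den]

lemma tendsto_Q1 {z : ℝ} (hz0 : 0 ≤ z) (hz1 : z < 1) :
    Tendsto (Q1 z) (𝓝[>] 0) (𝓝 (z / 2)) := by
  have hD := fun y => (den_pos hz0 hz1 y).ne'
  have h := tendsto_div_pow _ _ 3 (hasDerivAt_num1 hz0 hz1) (by simp [X_zero])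
    (ContinuousAt.div (by fun_prop) ((hasDerivAt_den z 0).continuousAt.pow 2)
      (pow_ne_zero 2 (hD 0)))
  convert (show Tendsto (Q1 z) _ _ from h) using 2
  norm_num [den]
  ring

lemma tendsto_Q2 {z : ℝ} (hz0 : 0 ≤ z) (hz1 : z < 1) :
    Tendsto (Q2 z) (𝓝[>] 0) (𝓝 (2 * (4 * z ^ 2 - 1) / 5)) := by
  have hD := fun y => (den_pos hz0 hz1 y).ne'
  have hc := (hasDerivAt_den z 0).continuousAt
  have h := tendsto_div_pow _ _ 4 (hasDerivAt_num2 hz0 hz1) (by simp [X_zero])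
    ((continuousAt_const.div (hc.pow 2) (pow_ne_zero 2 (hD 0))).add
      (ContinuousAt.div (by fun_prop) (hc.pow 3) (pow_ne_zero 3 (hD 0))))
  convert (show Tendsto (Q2 z) _ _ from h) using 2
  norm_num [den]
  ring

lemma hasDerivAt_Q {z : ℝ} (hz0 : 0 ≤ z) (hz1 : z < 1) {y : ℝ} (hy : y ≠ 0) :
    HasDerivAt (Q z) (Q1 z y) y := by
  have hD := (den_pos hz0 hz1 y).ne'
  refine ((hasDerivAt_X hz0 hz1 y).div (hasDerivAt_pow 3 y) (pow_ne_zero 3 hy)).congr_deriv ?_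
  unfold Q1
  field_simp
  push_cast
  ring

lemma hasDerivAt_Q1 {z : ℝ} (hz0 : 0 ≤ z) (hz1 : z < 1) {y : ℝ} (hy : y ≠ 0) :
    HasDerivAt (Q1 z) (Q2 z y) y := by
  have hD := (den_pos hz0 hz1 y).ne'
  refine ((hasDerivAt_num1 hz0 hz1 y).div (hasDerivAt_pow 4 y) (pow_ne_zero 4 hy)).congr_deriv ?_
  unfold Q2
  field_simp
  push_cast
  ring

lemma hasDerivAt_cA (z y : ℝ) : HasDerivAt (cA z) (cA1 z y) y := by
  refine ((((((hasDerivAt_const y (12 : ℝ)).sub ((hasDerivAt_id y).const_mul (54 * z))).add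
    ((hasDerivAt_pow 2 y).const_mul (20 + 76 * z ^ 2))).sub
    ((hasDerivAt_pow 3 y).const_mul (52 * z + 32 * z ^ 3))).add
    ((hasDerivAt_pow 4 y).const_mul (8 + 28 * z ^ 2))).sub
    ((hasDerivAt_pow 5 y).const_mul (6 * z))).congr_deriv ?_
  unfold cA1
  push_cast
  ring

lemma hasDerivAt_cA1 (z y : ℝ) : HasDerivAt (cA1 z) (cA2 z y) y := by
  refine (((((hasDerivAt_const y (-54 * z)).add
    ((hasDerivAt_id y).const_mul (2 * (20 + 76 * z ^ 2)))).sub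
    ((hasDerivAt_pow 2 y).const_mul (3 * (52 * z + 32 * z ^ 3)))).add
    ((hasDerivAt_pow 3 y).const_mul (4 * (8 + 28 * z ^ 2)))).sub
    ((hasDerivAt_pow 4 y).const_mul (30 * z))).congr_deriv ?_
  unfold cA2
  push_cast
  ring

lemma hasDerivAt_cB (z y : ℝ) : HasDerivAt (cB z) (cB1 z y) y := by
  refine ((((hasDerivAt_const y (-2 : ℝ)).add ((hasDerivAt_id y).const_mul (6 * z))).sub
    ((hasDerivAt_pow 2 y).const_mul (2 + 4 * z ^ 2))).add
    ((hasDerivAt_pow 3 y).const_mul (2 * z))).congr_deriv ?_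
  unfold cB1
  push_cast
  ring

lemma hasDerivAt_cB1 (z y : ℝ) : HasDerivAt (cB1 z) (cB2 z y) y := by
  refine (((hasDerivAt_const y (6 * z)).sub
    ((hasDerivAt_id y).const_mul (2 * (2 + 4 * z ^ 2)))).add
    ((hasDerivAt_pow 2 y).const_mul (6 * z))).congr_deriv ?_
  unfold cB2
  push_cast
  ring

lemma j_eq {z y : ℝ} (hy : y ≠ 0) : j z y = cA z y * Q z y ^ 3 + cB z y * Q z y ^ 2 := by
  unfold j w cA cB Q
  field_simp
  ring

lemma hasDerivAt_j {z : ℝ} (hz0 : 0 ≤ z) (hz1 : z < 1) {y : ℝ} (hy : 0 < y) :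
    HasDerivAt (j z) (j1 z y) y := by
  have hQ := hasDerivAt_Q hz0 hz1 hy.ne'
  have h := ((hasDerivAt_cA z y).mul (hQ.pow 3)).add ((hasDerivAt_cB z y).mul (hQ.pow 2))
  refine (h.congr_of_eventuallyEq ?_).congr_deriv ?_
  · filter_upwards [lt_mem_nhds hy] with x hx
    exact j_eq hx.ne'
  · simp only [Pi.pow_apply]
    unfold j1
    push_cast
    ring

lemma hasDerivAt_j1 {z : ℝ} (hz0 : 0 ≤ z) (hz1 : z < 1) {y : ℝ} (hy : 0 < y) :
    HasDerivAt (j1 z) (j2 z y) y := by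
  have hQ := hasDerivAt_Q hz0 hz1 hy.ne'
  have hQ1 := hasDerivAt_Q1 hz0 hz1 hy.ne'
  have h := ((((hasDerivAt_cA1 z y).mul (hQ.pow 3)).add
    ((((hasDerivAt_cA z y).const_mul 3).mul (hQ.pow 2)).mul hQ1)).add
    ((hasDerivAt_cB1 z y).mul (hQ.pow 2))).add
    ((((hasDerivAt_cB z y).const_mul 2).mul hQ).mul hQ1)
  refine h.congr_deriv ?_
  simp only [Pi.pow_apply, Pi.mul_apply]
  unfold j2
  push_cast
  ring

lemma tendsto_zero_right {f : ℝ → ℝ} (hf : Continuous f) : Tendsto f (𝓝[>] 0) (𝓝 (f 0)) :=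
  (hf.tendsto 0).mono_left nhdsWithin_le_nhds

lemma tendsto_j1 {z : ℝ} (hz0 : 0 ≤ z) (hz1 : z < 1) :
    Tendsto (j1 z) (𝓝[>] 0) (𝓝 0) := by
  have hQ := tendsto_Q hz0 hz1
  have hQ1 := tendsto_Q1 hz0 hz1
  have hA := tendsto_zero_right (f := cA z) (by unfold cA; fun_prop)
  have hA1 := tendsto_zero_right (f := cA1 z) (by unfold cA1; fun_prop)
  have hB := tendsto_zero_right (f := cB z) (by unfold cB; fun_prop)
  have hB1 := tendsto_zero_right (f := cB1 z) (by unfold cB1; fun_prop)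
  have h := (((hA1.mul (hQ.pow 3)).add (((hA.const_mul 3).mul (hQ.pow 2)).mul hQ1)).add
    (hB1.mul (hQ.pow 2))).add (((hB.const_mul 2).mul hQ).mul hQ1)
  convert (show Tendsto (j1 z) _ _ from h) using 2
  simp only [cA, cA1, cB, cB1]
  ring

lemma tendsto_j2 {z : ℝ} (hz0 : 0 ≤ z) (hz1 : z < 1) :
    Tendsto (j2 z) (𝓝[>] 0) (𝓝 (-(4 - z ^ 2) / 135)) := by
  have hQ := tendsto_Q hz0 hz1
  have hQ1 := tendsto_Q1 hz0 hz1
  have hQ2 := tendsto_Q2 hz0 hz1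
  have hA := tendsto_zero_right (f := cA z) (by unfold cA; fun_prop)
  have hA1 := tendsto_zero_right (f := cA1 z) (by unfold cA1; fun_prop)
  have hA2 := tendsto_zero_right (f := cA2 z) (by unfold cA2; fun_prop)
  have hB := tendsto_zero_right (f := cB z) (by unfold cB; fun_prop)
  have hB1 := tendsto_zero_right (f := cB1 z) (by unfold cB1; fun_prop)
  have hB2 := tendsto_zero_right (f := cB2 z) (by unfold cB2; fun_prop)
  have h := (((((((hA2.mul (hQ.pow 3)).add (((hA1.const_mul 6).mul (hQ.pow 2)).mul hQ1)).add
    (((hA.const_mul 6).mul hQ).mul (hQ1.pow 2))).add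
    (((hA.const_mul 3).mul (hQ.pow 2)).mul hQ2)).add (hB2.mul (hQ.pow 2))).add
    (((hB1.const_mul 4).mul hQ).mul hQ1)).add
    ((hB.const_mul 2).mul (hQ1.pow 2))).add (((hB.const_mul 2).mul hQ).mul hQ2)
  convert (show Tendsto (j2 z) _ _ from h) using 2
  simp only [cA, cA1, cA2, cB, cB1, cB2]
  ring

/-- For `0 ≤ z < 1`, `j_z'(y)/y → -(4 - z²)/135` and `j_z''(y) → -(4 - z²)/135`
as `y → 0⁺`. -/
theorem stmt_10 (z : ℝ) (hz0 : 0 ≤ z) (hz1 : z < 1) :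
    Tendsto (fun y : ℝ => deriv (j z) y / y) (𝓝[>] 0) (𝓝 (-(4 - z ^ 2) / 135)) ∧
    Tendsto (fun y : ℝ => deriv (deriv (j z)) y) (𝓝[>] 0) (𝓝 (-(4 - z ^ 2) / 135)) := by
  have hpos : ∀ᶠ y : ℝ in 𝓝[>] 0, 0 < y := self_mem_nhdsWithin
  have hd : ∀ y : ℝ, 0 < y → deriv (j z) y = j1 z y := fun y hy => (hasDerivAt_j hz0 hz1 hy).deriv
  constructor
  · have h : Tendsto (fun y => j1 z y / y) (𝓝[>] 0) (𝓝 (-(4 - z ^ 2) / 135)) := by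
      refine HasDerivAt.lhopital_zero_nhdsGT (f' := j2 z) (g' := fun _ => 1)
        (hpos.mono fun y hy => hasDerivAt_j1 hz0 hz1 hy) (.of_forall fun y => hasDerivAt_id y)
        (.of_forall fun _ => one_ne_zero) (tendsto_j1 hz0 hz1)
        (tendsto_zero_right continuous_id) ?_
      simpa using tendsto_j2 hz0 hz1
    exact h.congr' (hpos.mono fun y hy => by simp only [hd y hy])
  · refine (tendsto_j2 hz0 hz1).congr' (hpos.mono fun y hy => ?_)
    have he : deriv (j z) =ᶠ[𝓝 y] j1 z := (lt_mem_nhds hy).mono fun x hx => hd x hx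
    exact ((he.deriv_eq).trans (hasDerivAt_j1 hz0 hz1 hy).deriv).symm
end
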